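/- arXiv:1207.5222 — 2 statements merged into one kernel-verified Lean document; each statement's English description precedes it below -/
import Mathlib

section
/- For every real λ > 0: Γ(λ) / (λ^λ e^{−λ}) = ∫_0^{+∞} e^{−λ(x − log(1+x))} dx + ∫_0^1 e^{−λ(−x − log(1−x))} dx, where both integrals are finite. -/
open MeasureTheory Real

/-- For every `λ > 0`, `Γ(λ)/(λ^λ e^{-λ})` splits as the sum of the two Laplace-type
integrals `∫_0^∞ e^{-λ(x - log(1+x))} dx` and `∫_0^1 e^{-λ(-x - log(1-x))} dx`,
both of which are finite. -/
theorem gamma_eq_sum_laplace_integrals (l : ℝ) (hl : 0 < l) :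
    IntegrableOn (fun x : ℝ => Real.exp (-l * (x - Real.log (1 + x)))) (Set.Ioi 0) ∧
    IntegrableOn (fun x : ℝ => Real.exp (-l * (-x - Real.log (1 - x)))) (Set.Ioo 0 1) ∧
    Real.Gamma l / (l ^ l * Real.exp (-l)) =
      (∫ x in Set.Ioi (0 : ℝ), Real.exp (-l * (x - Real.log (1 + x)))) +
        ∫ x in Set.Ioo (0 : ℝ) 1, Real.exp (-l * (-x - Real.log (1 - x))) := by
  let G : ℝ → ℝ := fun t => Real.exp l * (t ^ l * Real.exp (-(l * t)))
  have hG : IntegrableOn G (Set.Ioi 0) := by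
    have h := integrableOn_rpow_mul_exp_neg_mul_rpow (p := 1) (s := l) (b := l)
      (by linarith) one_pos hl
    simp only [Real.rpow_one, neg_mul] at h
    exact h.const_mul _
  have hI : ∫ t in Set.Ioi (0:ℝ), G t = Real.Gamma l / (l ^ l * Real.exp (-l)) := by
    have h := Real.integral_rpow_mul_exp_neg_mul_Ioi (a := l + 1) (r := l) (by linarith) hl
    simp only [add_sub_cancel_right] at h
    simp only [G]
    rw [integral_const_mul, h, Real.Gamma_add_one hl.ne', one_div, Real.inv_rpow hl.le,
      Real.rpow_add_one hl.ne', Real.exp_neg]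
    have := (Real.rpow_pos_of_pos hl l).ne'
    field_simp
  have key : ∀ x t : ℝ, 0 < t → t = 1 + x →
      G t = Real.exp (-l * (x - Real.log t)) := by
    intro x t ht hx
    simp only [G]
    rw [Real.rpow_def_of_pos ht, ← Real.exp_add, ← Real.exp_add]
    congr 1
    subst hx
    ring
  have e1 : Set.EqOn (fun x : ℝ => G (1 + x))
      (fun x : ℝ => Real.exp (-l * (x - Real.log (1 + x)))) (Set.Ioi 0) := by
    intro x hx
    exact key x _ (by have : 0 < x := hx; linarith) rfl
  have e2 : Set.EqOn (fun x : ℝ => G (1 - x))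
      (fun x : ℝ => Real.exp (-l * (-x - Real.log (1 - x)))) (Set.Ioo 0 1) := by
    intro x hx
    exact key (-x) _ (by linarith [hx.2]) (by ring)
  have m1 := measurePreserving_add_left (volume : Measure ℝ) 1
  have m2 := Measure.measurePreserving_sub_left (volume : Measure ℝ) 1
  have b1 : MeasurableEmbedding (fun x : ℝ => 1 + x) := (MeasurableEquiv.addLeft (1:ℝ)).measurableEmbedding
  have b2 : MeasurableEmbedding (fun x : ℝ => 1 - x) := (MeasurableEquiv.subLeft (1:ℝ)).measurableEmbedding
  have p1 : (fun x : ℝ => 1 + x) ⁻¹' Set.Ioi 1 = Set.Ioi 0 := by ext x; simp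
  have p2 : (fun x : ℝ => 1 - x) ⁻¹' Set.Ioo 0 1 = Set.Ioo 0 1 := by
    ext x; simp
  have hG1 : IntegrableOn G (Set.Ioi 1) := hG.mono_set (Set.Ioi_subset_Ioi zero_le_one)
  have hG2 : IntegrableOn G (Set.Ioc 0 1) := hG.mono_set Set.Ioc_subset_Ioi_self
  have hG3 : IntegrableOn G (Set.Ioo 0 1) := hG.mono_set Set.Ioo_subset_Ioi_self
  refine ⟨?_, ?_, ?_⟩
  · refine IntegrableOn.congr_fun ?_ e1 measurableSet_Ioi
    have := (m1.integrableOn_comp_preimage b1 (f := G) (s := Set.Ioi 1)).2 hG1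
    rwa [p1] at this
  · refine IntegrableOn.congr_fun ?_ e2 measurableSet_Ioo
    have := (m2.integrableOn_comp_preimage b2 (f := G) (s := Set.Ioo 0 1)).2 hG3
    rwa [p2] at this
  · rw [← setIntegral_congr_fun measurableSet_Ioi e1, ← setIntegral_congr_fun measurableSet_Ioo e2,
      ← hI]
    have i1 := m1.setIntegral_preimage_emb b1 G (Set.Ioi 1)
    have i2 := m2.setIntegral_preimage_emb b2 G (Set.Ioo 0 1)
    rw [p1] at i1
    rw [p2] at i2
    rw [i1, i2, ← integral_Ioc_eq_integral_Ioo, add_comm,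
      ← Set.Ioc_union_Ioi_eq_Ioi (zero_le_one (α := ℝ)),
      setIntegral_union (Set.Ioc_disjoint_Ioi le_rfl) measurableSet_Ioi hG2 hG1]
end

section
/- For every positive integer m: e^{−m} Σ_{k=0}^{m−1} m^k/k! = (m^m e^{−m}/m!) ( −1 + m ∫_0^{+∞} e^{−m(x − log(1+x))} dx ). (The left-hand side equals Γ(m,m)/Γ(m), the normalized upper incomplete gamma function at equal arguments.) -/
open MeasureTheory Real

lemma aux_deriv (n : ℕ) (y : ℝ) :
    HasDerivAt (fun y : ℝ => Real.exp (-y) * ∑ k ∈ Finset.range (n + 1),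
      y ^ k / (Nat.factorial k : ℝ)) (-(Real.exp (-y) * (y ^ n / (Nat.factorial n : ℝ)))) y := by
  have he : HasDerivAt (fun y : ℝ => Real.exp (-y)) (-Real.exp (-y)) y := by
    simpa using (hasDerivAt_neg y).exp
  induction n with
  | zero => simpa using he
  | succ n ih =>
    have h2 := ih.add (he.mul ((hasDerivAt_pow (n + 1) y).div_const
      (Nat.factorial (n + 1) : ℝ)))
    refine (h2.congr_deriv ?_).congr_of_eventuallyEq (Filter.Eventually.of_forall fun z => ?_)
    · have : (Nat.factorial n : ℝ) ≠ 0 := by positivity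
      have : (n : ℝ) + 1 ≠ 0 := by positivity
      rw [Nat.factorial_succ]
      push_cast
      field_simp
      ring
    · simp only [Pi.add_apply, Pi.mul_apply]
      rw [Finset.sum_range_succ _ (n + 1)]
      ring

lemma aux_tendsto (n : ℕ) :
    Filter.Tendsto (fun y : ℝ => Real.exp (-y) * ∑ k ∈ Finset.range (n + 1),
      y ^ k / (Nat.factorial k : ℝ)) Filter.atTop (nhds 0) := by
  have h : Filter.Tendsto (fun y : ℝ => ∑ k ∈ Finset.range (n + 1),
      (y ^ k * Real.exp (-y)) / (Nat.factorial k : ℝ)) Filter.atTop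
      (nhds (∑ k ∈ Finset.range (n + 1), 0 / (Nat.factorial k : ℝ))) :=
    tendsto_finsetSum _ fun k _ =>
      (Real.tendsto_pow_mul_exp_neg_atTop_nhds_zero k).div_const _
  simp only [zero_div, Finset.sum_const_zero] at h
  refine h.congr fun y => ?_
  rw [Finset.mul_sum]
  exact Finset.sum_congr rfl fun k _ => by ring

lemma aux_integral (m : ℕ) (hm : 0 < m) :
    ∫ x in Set.Ioi (0 : ℝ), Real.exp (-(m : ℝ) * (x - Real.log (1 + x))) =
      (Nat.factorial m : ℝ) / (m : ℝ) ^ (m + 1) *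
        ∑ k ∈ Finset.range (m + 1), (m : ℝ) ^ k / (Nat.factorial k : ℝ) := by
  have hm' : (0 : ℝ) < m := by exact_mod_cast hm
  set c : ℝ := -((Nat.factorial m : ℝ) / (m : ℝ) ^ (m + 1) * Real.exp m) with hc
  set G : ℝ → ℝ := fun y : ℝ => Real.exp (-y) * ∑ k ∈ Finset.range (m + 1),
      y ^ k / (Nat.factorial k : ℝ) with hG
  have hd : ∀ x ∈ Set.Ici (0 : ℝ), HasDerivAt (fun x : ℝ => c * G (m * (1 + x)))
      (Real.exp (-(m : ℝ) * (x - Real.log (1 + x)))) x := by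
    intro x hx
    have hx : (0 : ℝ) ≤ x := hx
    have h1 : HasDerivAt (fun x : ℝ => (m : ℝ) * (1 + x)) (m : ℝ) x := by
      simpa using ((hasDerivAt_id x).const_add 1).const_mul (m : ℝ)
    have h2 := ((aux_deriv m (m * (1 + x))).comp x h1).const_mul c
    refine h2.congr_deriv ?_
    have e1 : Real.exp (-(m : ℝ) * (x - Real.log (1 + x)))
        = Real.exp m * Real.exp (-(m * (1 + x))) * (1 + x) ^ m := by
      have : (1 + x) ^ m = Real.exp (m * Real.log (1 + x)) := by
        rw [Real.exp_nat_mul, Real.exp_log (by linarith)]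
      rw [this, ← Real.exp_add, ← Real.exp_add]
      congr 1
      ring
    rw [e1, hc, mul_pow]
    have : (Nat.factorial m : ℝ) ≠ 0 := by positivity
    field_simp
    ring
  have ht : Filter.Tendsto (fun x : ℝ => c * G (m * (1 + x))) Filter.atTop (nhds 0) := by
    have h1 : Filter.Tendsto (fun x : ℝ => (m : ℝ) * (1 + x)) Filter.atTop Filter.atTop :=
      (Filter.tendsto_atTop_add_const_left _ 1 Filter.tendsto_id).const_mul_atTop hm'
    simpa using ((aux_tendsto m).comp h1).const_mul c
  rw [integral_Ioi_of_hasDerivAt_of_nonneg' hd (fun x _ => (Real.exp_pos _).le) ht]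
  simp only [hG, hc, add_zero, mul_one, Real.exp_neg]
  have := Real.exp_ne_zero (m : ℝ)
  field_simp
  ring



/-- For every positive integer `m`,
`e^{-m} ∑_{k=0}^{m-1} m^k/k! = (m^m e^{-m}/m!)(-1 + m ∫_0^∞ e^{-m(x - log(1+x))} dx)`.
The left-hand side equals `Γ(m,m)/Γ(m)`, the normalized upper incomplete gamma function
at equal arguments. -/
theorem incompleteGamma_ratio_eq (m : ℕ) (hm : 0 < m) :
    Real.exp (-(m : ℝ)) * ∑ k ∈ Finset.range m, (m : ℝ) ^ k / (Nat.factorial k : ℝ) =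
      ((m : ℝ) ^ m * Real.exp (-(m : ℝ)) / (Nat.factorial m : ℝ)) *
        (-1 + (m : ℝ) *
          ∫ x in Set.Ioi (0 : ℝ), Real.exp (-(m : ℝ) * (x - Real.log (1 + x)))) := by
  rw [aux_integral m hm, Finset.sum_range_succ]
  have hm' : (m : ℝ) ≠ 0 := by positivity
  have : (Nat.factorial m : ℝ) ≠ 0 := by positivity
  field_simp
  ring
end
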